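/- Let B₀ be an n×n complex matrix with B₀² = 0, let t = rank(B₀) and s = n - 2t. Then B₀ has a square root if and only if 2t ≤ n and (t even or s ≥ 1), equivalently if and only if n ≠ 2t or t is even. -/

import Mathlib

/-!
Everything is done for an endomorphism `f` of a finite-dimensional space with `f * f = 0` and
rank `t`; since `range f ≤ ker f`, always `2 * t ≤ n`.

Existence. Choosing preimages of a basis of `range f` and a complement of `range f` inside `ker f`
identifies the space with `C × C × S`, where `dim C = t`, `dim S = n - 2 * t`, and `f` becomes
`(a, b, s) ↦ (0, a, 0)` (`exists_normal_form`). When `t = 2 * m + r` and `dim S = r + q`, split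
`C = M × M × R` and `S = R × Q`; a square root is then explicit (`modelRoot`): on the `M` parts it
consists of `m` nilpotent Jordan blocks of size 4, on the `R` parts of `r` blocks of size 3, and it
vanishes on `Q`. Taking `r = t % 2` covers `t` even, and `t` odd with `n ≠ 2 * t`.

Obstruction. If `n = 2 * t` then `ker f = range f`. For a root `g`, the restriction of `g` to
`range f` again has kernel equal to its range, so `dim range f = t` is even
(`even_rank_of_sq_root`).
-/

open Module LinearMap

namespace SqRootNilpotent

variable {K V : Type*} [Field K] [AddCommGroup V] [Module K V]

lemma range_le_ker {f : End K V} (hf : f * f = 0) : range f ≤ ker f := by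
  rintro _ ⟨x, rfl⟩
  simpa using LinearMap.congr_fun hf x

/-- The Jordan form of a square-zero endomorphism, with `C` carrying the tops of the blocks of
size 2 in the first factor and their bottoms in the second, and `S` the blocks of size 1. -/
lemma exists_normal_form [FiniteDimensional K V] {f : End K V} (hf : f * f = 0)
    {C S : Type*} [AddCommGroup C] [Module K C] [FiniteDimensional K C]
    [AddCommGroup S] [Module K S] [FiniteDimensional K S]
    (hC : finrank K C = finrank K (range f))
    (hV : finrank K V = 2 * finrank K (range f) + finrank K S) :
    ∃ e : (C × C × S) ≃ₗ[K] V, ∀ a b s, f (e (a, b, s)) = e (0, a, 0) := by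
  have hff : ∀ x, f (f x) = 0 := fun x => by simpa using LinearMap.congr_fun hf x
  -- a lift `i` of an isomorphism `C ≃ range f` along `f`
  obtain ⟨g, hg⟩ := f.rangeRestrict.exists_rightInverse_of_surjective f.range_rangeRestrict
  let eC : C ≃ₗ[K] range f := LinearEquiv.ofFinrankEq _ _ hC
  let i : C →ₗ[K] V := g ∘ₗ eC.toLinearMap
  have hi : ∀ c, f (i c) = eC c := fun c =>
    congrArg Subtype.val (LinearMap.congr_fun hg (eC c))
  -- `W ⊓ ker f` is a complement of `range f` inside `ker f`
  obtain ⟨W, hW⟩ := Submodule.exists_isCompl (range f)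
  have hS : finrank K S = finrank K (W ⊓ ker f : Submodule K V) := by
    have h1 := Submodule.finrank_sup_add_finrank_inf_eq W (ker f)
    have h2 : W ⊔ ker f = ⊤ := by
      rw [eq_top_iff, ← hW.sup_eq_top, sup_comm]
      exact sup_le_sup_left (range_le_ker hf) _
    have h3 := Submodule.finrank_add_eq_of_isCompl hW
    have h4 := f.finrank_range_add_finrank_ker
    rw [h2, finrank_top] at h1
    omega
  let eS : S ≃ₗ[K] (W ⊓ ker f : Submodule K V) := LinearEquiv.ofFinrankEq _ _ hS
  let j : S →ₗ[K] V := (W ⊓ ker f).subtype ∘ₗ eS.toLinearMap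
  have hj : ∀ s, f (j s) = 0 := fun s => (eS s).2.2
  let φ : (C × C × S) →ₗ[K] V := i.coprod ((f ∘ₗ i).coprod j)
  have hφ : ∀ a b s, φ (a, b, s) = i a + (f (i b) + j s) := fun a b s => rfl
  have hinj : Function.Injective φ := by
    rw [← LinearMap.ker_eq_bot, LinearMap.ker_eq_bot']
    rintro ⟨a, b, s⟩ h
    rw [hφ] at h
    have ha : a = 0 := by
      have := congrArg f h
      rw [map_add, map_add, hff, hj, add_zero, add_zero, map_zero, hi] at this
      simpa using this
    subst ha
    rw [map_zero, zero_add] at h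
    have hs : j s = 0 := by
      refine Submodule.disjoint_def.1 hW.disjoint _ ?_ (eS s).2.1
      rw [← neg_eq_of_add_eq_zero_right h]
      exact neg_mem ⟨_, rfl⟩
    have hb : b = 0 := by
      rw [hs, add_zero, hi] at h
      simpa using h
    have hs' : s = 0 := by
      have : eS s = 0 := Subtype.ext hs
      simpa using this
    simp [hb, hs']
  have hdim : finrank K (C × C × S) = finrank K V := by
    rw [finrank_prod, finrank_prod]; omega
  refine ⟨LinearEquiv.ofInjectiveOfFinrankEq φ hinj hdim, fun a b s => ?_⟩
  change f (φ (a, b, s)) = φ (0, a, 0)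
  simp [hφ, hff, hj]

/-- A square root of `(a, b, s) ↦ (0, a, 0)` on `C × C × S` with `C = M × M × R` and `S = R × Q`.
Elements of `M` move along a chain of length 4 and elements of `R` along a chain of length 3. -/
def modelRoot (K M R Q : Type*) [Field K] [AddCommGroup M] [Module K M]
    [AddCommGroup R] [Module K R] [AddCommGroup Q] [Module K Q] :
    End K ((M × M × R) × (M × M × R) × (R × Q)) where
  toFun x := ((0, x.1.1, 0), (x.1.2.1, x.2.1.1, x.2.2.1), (x.1.2.2, 0))
  map_add' x y := by simp
  map_smul' c x := by simp

lemma exists_sq_root [FiniteDimensional K V] {f : End K V} (hf : f * f = 0) {m r q : ℕ}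
    (ht : finrank K (range f) = 2 * m + r)
    (hV : finrank K V = 2 * (2 * m + r) + (r + q)) : ∃ g : End K V, g * g = f := by
  obtain ⟨e, he⟩ := exists_normal_form hf
    (C := (Fin m → K) × (Fin m → K) × (Fin r → K)) (S := (Fin r → K) × (Fin q → K))
    (by simp [ht]; ring) (by simp [ht, hV])
  refine ⟨e.conj (modelRoot K (Fin m → K) (Fin r → K) (Fin q → K)), ?_⟩
  ext x
  obtain ⟨⟨a, b, s⟩, rfl⟩ := e.surjective x
  rw [he]
  simp [LinearEquiv.conj_apply, modelRoot]

lemma even_rank_of_sq_root [FiniteDimensional K V] {f g : End K V} (hg : g * g = f)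
    (hfr : ker f = range f) : Even (finrank K (range f)) := by
  have hgg : ∀ x, g (g x) = f x := fun x => LinearMap.congr_fun hg x
  have hmem : ∀ x, f x = 0 ↔ ∃ y, f y = x := fun x => by
    rw [← LinearMap.mem_ker, hfr, LinearMap.mem_range]
  have hmaps : ∀ x ∈ range f, g x ∈ range f := by
    rintro _ ⟨y, rfl⟩
    exact ⟨g y, by simp [← hgg]⟩
  let h : End K (range f) := g.restrict hmaps
  have hh : ker h = range h := by
    ext ⟨x, hx⟩
    constructor
    · intro hx0
      have hgx : g x = 0 := congrArg Subtype.val hx0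
      obtain ⟨y, rfl⟩ := hx
      -- `g y` is killed by `f`, so `g y = f z` and `f y = g (f z)`
      obtain ⟨z, hz⟩ := (hmem (g y)).1 (by simpa [← hgg] using hgx)
      exact ⟨⟨f z, z, rfl⟩, Subtype.ext (by change g (f z) = f y; rw [hz, hgg])⟩
    · rintro ⟨⟨y, hy⟩, hyx⟩
      have hyx : g y = x := congrArg Subtype.val hyx
      refine Subtype.ext ?_
      change g x = 0
      rw [← hyx, hgg]
      exact (hmem y).2 hy
  have := h.finrank_range_add_finrank_ker
  rw [hh] at this
  exact ⟨_, this.symm⟩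

lemma exists_sq_root_iff [FiniteDimensional K V] {f : End K V} (hf : f * f = 0) :
    (∃ g : End K V, g * g = f) ↔
      (finrank K V ≠ 2 * finrank K (range f) ∨ Even (finrank K (range f))) := by
  have hle := Submodule.finrank_mono (range_le_ker hf)
  have hrn := f.finrank_range_add_finrank_ker
  constructor
  · rintro ⟨g, hg⟩
    refine or_iff_not_imp_left.2 fun hn => even_rank_of_sq_root hg ?_
    exact (Submodule.eq_of_le_of_finrank_eq (range_le_ker hf) (by omega)).symm
  · intro h
    have hr : finrank K (range f) % 2 ≤ finrank K V - 2 * finrank K (range f) := by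
      rw [Nat.even_iff] at h; omega
    exact exists_sq_root hf (m := finrank K (range f) / 2) (r := finrank K (range f) % 2)
      (q := finrank K V - 2 * finrank K (range f) - finrank K (range f) % 2)
      (by omega) (by omega)

end SqRootNilpotent

theorem sq_root_nilpotent_order_two_rank {n : ℕ} (B₀ : Matrix (Fin n) (Fin n) ℂ)
    (hB : B₀ ^ 2 = 0) (t s : ℕ) (ht : t = B₀.rank) (hs : s = n - 2 * t) :
    ((∃ A : Matrix (Fin n) (Fin n) ℂ, A ^ 2 = B₀) ↔
        (2 * t ≤ n ∧ (Even t ∨ 1 ≤ s))) ∧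
      ((∃ A : Matrix (Fin n) (Fin n) ℂ, A ^ 2 = B₀) ↔ (n ≠ 2 * t ∨ Even t)) := by
  let L := Matrix.toLinAlgEquiv' (R := ℂ) (n := Fin n)
  have hf : L B₀ * L B₀ = 0 := by rw [← map_mul, ← pow_two, hB, map_zero]
  have hrank : t = finrank ℂ (range (L B₀)) := ht
  have key : (∃ A : Matrix (Fin n) (Fin n) ℂ, A ^ 2 = B₀) ↔ (n ≠ 2 * t ∨ Even t) := by
    have h := SqRootNilpotent.exists_sq_root_iff hf
    rw [← hrank, finrank_fin_fun] at h
    rw [← h, L.surjective.exists]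
    simp only [pow_two, ← map_mul, L.injective.eq_iff]
  have h2t : 2 * t ≤ n := by
    have h1 := Submodule.finrank_mono (SqRootNilpotent.range_le_ker hf)
    have h2 := (L B₀).finrank_range_add_finrank_ker
    rw [finrank_fin_fun] at h2
    omega
  refine ⟨key.trans ?_, key⟩
  constructor
  · rintro (h | h)
    · exact ⟨h2t, Or.inr (by omega)⟩
    · exact ⟨h2t, Or.inl h⟩
  · rintro ⟨-, h | h⟩
    · exact Or.inr h
    · exact Or.inl (by omega)
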